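/- For every positive integer k, there exists a k-connected graph G with χ_T(G) ≠ χ_P(G). Specifically, for every odd n ≥ max(5,k) and m ≥ n+4, the graph R_m(C_n) is k-connected with tree-chromatic number 2 and path-chromatic number 3. -/

import Mathlib

open SimpleGraph

universe u
variable {V : Type u}

/-- Closed neighborhood of a vertex set. -/
def closedNbhd (G : SimpleGraph V) (U : Set V) : Set V :=
  U ∪ {v | ∃ u ∈ U, G.Adj u v}

/-- Bag `X_ℓ = N[{v_1,…,v_ℓ}] \ {v_1,…,v_{ℓ-1}}` of the enumeration `σ`. -/
def bagX {n : ℕ} (G : SimpleGraph V) (σ : Fin n ≃ V) (ℓ : Fin n) : Set V :=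
  closedNbhd G {v | ∃ j ≤ ℓ, v = σ j} \ {v | ∃ j < ℓ, v = σ j}

/-- Chromatic number of the subgraph induced by `S`. -/
noncomputable def chrom (G : SimpleGraph V) (S : Set V) : ℕ :=
  sInf {k | (G.induce S).Colorable k}

/-- Chromatic number of the path-decomposition `P_σ^G`. -/
noncomputable def decompChrom {n : ℕ} (G : SimpleGraph V) (σ : Fin n ≃ V) : ℕ :=
  sInf {k | ∀ ℓ, (G.induce (bagX G σ ℓ)).Colorable k}

/-- `B` is a path-decomposition of `G`. -/
def IsPathDecomp (G : SimpleGraph V) {s : ℕ} (B : Fin s → Set V) : Prop :=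
  (∀ v, ∃ t, v ∈ B t) ∧
  (∀ u v, G.Adj u v → ∃ t, u ∈ B t ∧ v ∈ B t) ∧
  (∀ v (t₁ t₂ t₃ : Fin s), t₁ ≤ t₂ → t₂ ≤ t₃ → v ∈ B t₁ → v ∈ B t₃ → v ∈ B t₂)

/-- Path-chromatic number. -/
noncomputable def pathChromatic (G : SimpleGraph V) : ℕ :=
  sInf {k | ∃ (s : ℕ) (B : Fin s → Set V), IsPathDecomp G B ∧
    ∀ t, (G.induce (B t)).Colorable k}

/-- `(T, B)` is a tree-decomposition of `G`. -/
def IsTreeDecomp {ι : Type u} (G : SimpleGraph V) (T : SimpleGraph ι) (B : ι → Set V) : Prop :=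
  T.IsTree ∧
  (∀ v, ∃ t, v ∈ B t) ∧
  (∀ u v, G.Adj u v → ∃ t, u ∈ B t ∧ v ∈ B t) ∧
  (∀ v, (T.induce {t | v ∈ B t}).Connected)

/-- Tree-chromatic number. -/
noncomputable def treeChromatic (G : SimpleGraph V) : ℕ :=
  sInf {k | ∃ (ι : Type u) (T : SimpleGraph ι) (B : ι → Set V),
    IsTreeDecomp G T B ∧ ∀ t, (G.induce (B t)).Colorable k}

/-- A special enumeration. -/
def IsSpecial {n : ℕ} (G : SimpleGraph V) (σ : Fin n ≃ V) : Prop :=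
  decompChrom G σ = pathChromatic G ∧
  ∀ i : Fin n, chrom G (bagX G σ i) = pathChromatic G →
    ∀ j : Fin n, j < i → ¬ G.Adj (σ j) (σ i)

/-- The graph `R_m(G)`; the vertex `(i, none)` plays the role of `(i, v₀)`. -/
def Rm (G : SimpleGraph V) (m : ℕ) : SimpleGraph (Fin m × Option V) :=
  SimpleGraph.fromRel (fun p q =>
    (p.1 = q.1 ∧ p.2 = none) ∨
    (p.1 ≠ q.1 ∧ ∃ u v, p.2 = some u ∧ q.2 = some v ∧ G.Adj u v))

/-- `[I, U] = { (i, v) : i ∈ I, v ∈ U }` inside `R_m(G)`. -/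
def box {m : ℕ} (I : Set (Fin m)) (U : Set V) : Set (Fin m × Option V) :=
  {p | p.1 ∈ I ∧ ∃ v ∈ U, p.2 = some v}

/-- Index of the first vertex in the enumeration `μ` satisfying `P`. -/
noncomputable def firstIdx {N : ℕ} {W : Type*} (μ : Fin N ≃ W) (P : W → Prop) : ℕ :=
  sInf {ℓ : ℕ | ∃ h : ℓ < N, P (μ ⟨ℓ, h⟩)}

/-- The cycle `C_n`: `v_j ~ v_{j'}` iff `|j - j'| ∈ {1, n-1}`. -/
def cyc (n : ℕ) : SimpleGraph (Fin n) :=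
  SimpleGraph.fromRel (fun a b => (b : ℕ) - (a : ℕ) = 1 ∨ (b : ℕ) - (a : ℕ) = n - 1)

/-- The Mycielskian of a graph. -/
def mycielskian (G : SimpleGraph V) : SimpleGraph (Option (V ⊕ V)) :=
  SimpleGraph.fromRel (fun a b =>
    match a, b with
    | some (Sum.inl u), some (Sum.inl v) => G.Adj u v
    | some (Sum.inr u), some (Sum.inl v) => G.Adj u v
    | none, some (Sum.inr _) => True
    | _, _ => False)

/-- Vertex types and graphs of the Mycielski family: `MycS 2` is a single edge. -/
def MycS : ℕ → Σ W : Type, SimpleGraph W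
  | 0 => ⟨Empty, ⊥⟩
  | 1 => ⟨Empty, ⊥⟩
  | 2 => ⟨Fin 2, ⊤⟩
  | (n + 3) => ⟨Option ((MycS (n + 2)).1 ⊕ (MycS (n + 2)).1), mycielskian (MycS (n + 2)).2⟩

/-- The vertex type of the `k`-Mycielski graph. -/
def MycV (k : ℕ) : Type := (MycS k).1

/-- The `k`-Mycielski graph `M_k`. -/
def Myc (k : ℕ) : SimpleGraph (MycV k) := (MycS k).2

/-!
Let `I` be an independent set of `G` with `G - I` bipartite, for instance a single vertex of an odd
cycle. A row of `R_m(G)` together with all copies of `G - I` can be coloured with three colours, and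
these sets are the bags of a path-decomposition. In a tree-decomposition the copies of `G - I` may
be moved to the centre of a star, so that the `i`-th leaf only has to carry the `i`-th row and the
copies of the neighbours of `I`; two colours suffice if these neighbours are independent.

Conversely, suppose that `m ≥ 9` and that all bags of a path-decomposition of `R_m(G)` are
bipartite. Let `q` be the third smallest time at which the centre `(i, v₀)` of a row disappears and
`p` the third largest time at which one appears.
* If `q ≤ p`, then three rows have lost their centre by the time `q` and three have not yet gained
  theirs. Every neighbour of a vertex with fewer than three copies in the bag of `q` then has its
  copies in the former rows in that bag, and it follows that a `2`-colouring of the bag induces one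
  of `G`.
* If `p < q`, then five centres lie in all bags between `p` and `q`. In such a bag two adjacent
  vertices cannot both have three copies in these five rows: the triples would share a row, whose
  centre is adjacent to both copies. Hence `G` is `2`-coloured according to whether a vertex ever
  has three copies present between `p` and `q`, except that the vertices which are over by the time
  `p` or have not begun by the time `q` are coloured by means of the bag of `p` or `q`.
-/

open scoped Finset

/-- `f` properly colours the subgraph of `G` induced by `S`; values of `f` outside `S` are
irrelevant, which keeps subtypes out of the arguments about bags. -/
def IsColoringOn {α : Type*} (G : SimpleGraph V) (f : V → α) (S : Set V) : Prop :=
  ∀ x ∈ S, ∀ y ∈ S, G.Adj x y → f x ≠ f y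

theorem exists_isColoringOn {α : Type*} [Fintype α] [Nonempty α] {G : SimpleGraph V} {S : Set V}
    {n : ℕ} (h : (G.induce S).Colorable n) (hn : n ≤ Fintype.card α) :
    ∃ f : V → α, IsColoringOn G f S := by
  obtain ⟨C⟩ : Nonempty ((G.induce S).Coloring α) := ⟨h.toColoring hn⟩
  refine ⟨Function.extend Subtype.val C fun _ => Classical.arbitrary α, fun x hx y hy hxy => ?_⟩
  have extend_eq (z : S) := Subtype.val_injective.extend_apply C (fun _ => Classical.arbitrary α) z
  rw [extend_eq ⟨x, hx⟩, extend_eq ⟨y, hy⟩]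
  exact C.valid hxy

theorem IsColoringOn.colorable {α : Type*} [Fintype α] {G : SimpleGraph V} {f : V → α} {S : Set V}
    (h : IsColoringOn G f S) : (G.induce S).Colorable (Fintype.card α) :=
  (Coloring.mk (fun x : S => f x) fun {x y} hxy => h x x.2 y y.2 hxy).colorable

theorem isBipartite_of_forall_adj_ne {G : SimpleGraph V} {f : V → Bool}
    (hf : ∀ v w, G.Adj v w → f v ≠ f w) : G.IsBipartite :=
  (Coloring.mk f fun {v w} => hf v w).colorable

theorem not_colorable_one_of_adj {G : SimpleGraph V} {S : Set V} {u v : V} (huv : G.Adj u v)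
    (hu : u ∈ S) (hv : v ∈ S) : ¬ (G.induce S).Colorable 1 := fun h => by
  obtain ⟨f, hf⟩ := exists_isColoringOn (α := Unit) h le_rfl
  exact hf u hu v hv huv rfl

/-- Counting form of the `r`-th order statistic (with `r` starting at `0`) of `g` on `K`. -/
theorem exists_card_filter_lt_le_and_lt_card_filter_le {ι τ : Type*} [LinearOrder τ] (g : ι → τ)
    {K : Finset ι} {r : ℕ} (hr : r < #K) :
    ∃ j ∈ K, #{i ∈ K | g i < g j} ≤ r ∧ r < #{i ∈ K | g i ≤ g j} := by
  have hne : {j ∈ K | r < #{i ∈ K | g i ≤ g j}}.Nonempty := by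
    obtain ⟨j, hj, hmax⟩ := K.exists_max_image g (Finset.card_pos.1 (r.zero_le.trans_lt hr))
    exact ⟨j, by rwa [Finset.mem_filter, Finset.filter_true_of_mem hmax, and_iff_right hj]⟩
  obtain ⟨j, hj, hmin⟩ := Finset.exists_min_image _ g hne
  obtain ⟨hjK, hrj⟩ := Finset.mem_filter.1 hj
  refine ⟨j, hjK, not_lt.1 fun hlt => ?_, hrj⟩
  obtain ⟨i, hi, himax⟩ :=
    Finset.exists_max_image {i ∈ K | g i < g j} g (Finset.card_pos.1 (r.zero_le.trans_lt hlt))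
  obtain ⟨hiK, hij⟩ := Finset.mem_filter.1 hi
  have hri : r < #{k ∈ K | g k ≤ g i} := hlt.trans_le (Finset.card_le_card fun k hk => ?_)
  · exact (hmin i (Finset.mem_filter.2 ⟨hiK, hri⟩)).not_gt hij
  exact Finset.mem_filter.2 ⟨(Finset.mem_filter.1 hk).1, himax k hk⟩

theorem exists_forall_lt_iff_lt_card_filter_lt {ι τ : Type*} [LinearOrder τ] (g : ι → τ)
    {K : Finset ι} {r : ℕ} (hr : r < #K) :
    ∃ j ∈ K, ∀ p, g j < p ↔ r < #{i ∈ K | g i < p} := by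
  obtain ⟨j, hj, hlt, hle⟩ := exists_card_filter_lt_le_and_lt_card_filter_le g hr
  refine ⟨j, hj, fun p => ⟨fun hp => hle.trans_le (Finset.card_le_card ?_), fun hp => ?_⟩⟩
  · exact Finset.monotone_filter_right K fun i _ hi => hi.trans_lt hp
  · by_contra! hpj
    refine hp.not_ge (le_trans (Finset.card_le_card ?_) hlt)
    exact Finset.monotone_filter_right K fun i _ hi => hi.trans_le hpj

theorem card_le_card_filter_le_and_le_add {ι τ : Type*} [LinearOrder τ] (K : Finset ι)
    (f g : ι → τ) (s t : τ) :
    #K ≤ #{k ∈ K | f k ≤ s ∧ t ≤ g k} + #{k ∈ K | s < f k} + #{k ∈ K | g k < t} := by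
  classical
  refine (Finset.card_le_card fun k hk => ?_).trans
    ((Finset.card_union_le _ _).trans (Nat.add_le_add_right (Finset.card_union_le _ _) _))
  simp only [Finset.mem_union, Finset.mem_filter, hk, true_and]
  grind

theorem exists_notMem_of_encard_lt {α β : Type*} {f : α → β} (hf : f.Injective) {U : Set β}
    (hU : U.encard < ENat.card α) : ∃ a, f a ∉ U := by
  by_contra! hmem
  exact hU.not_ge (hf.encard_range.trans (Set.encard_le_encard (Set.range_subset_iff.2 hmem)))

section Rm

variable {G : SimpleGraph V} {m : ℕ}

@[simp]
theorem Rm_adj_none_none {i j : Fin m} : ¬ (Rm G m).Adj (i, none) (j, none) := by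
  simp [Rm, eq_comm]

@[simp]
theorem Rm_adj_none_some {i j : Fin m} {v : V} :
    (Rm G m).Adj (i, none) (j, some v) ↔ i = j := by
  simp [Rm, eq_comm]

@[simp]
theorem Rm_adj_some_none {i j : Fin m} {v : V} :
    (Rm G m).Adj (i, some v) (j, none) ↔ i = j := by
  rw [adj_comm, Rm_adj_none_some, eq_comm]

@[simp]
theorem Rm_adj_some_some {i j : Fin m} {u v : V} :
    (Rm G m).Adj (i, some u) (j, some v) ↔ i ≠ j ∧ G.Adj u v := by
  simp only [Rm, fromRel_adj]
  grind [G.adj_comm u v]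

theorem Rm_induce_compl_connected (hG : ∀ v, ∃ w, G.Adj v w) {U : Set (Fin m × Option V)}
    (hUV : U.encard < ENat.card V) (hUm : U.encard < m) :
    ((Rm G m).induce Uᶜ).Connected := by
  obtain ⟨j, hj⟩ : ∃ j : Fin m, ∀ x, (j, x) ∉ U := by
    by_contra! hcon
    choose x hx using hcon
    obtain ⟨j, hj⟩ := exists_notMem_of_encard_lt (f := fun j => (j, x j))
      (fun _ _ h => congrArg Prod.fst h) (by simpa using hUm)
    exact hj (hx j)
  have reachable_of_adj {x y} (hx : x ∈ Uᶜ) (hy : y ∈ Uᶜ) (hxy : (Rm G m).Adj x y) :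
      ((Rm G m).induce Uᶜ).Reachable ⟨x, hx⟩ ⟨y, hy⟩ :=
    Adj.reachable (G := (Rm G m).induce Uᶜ) hxy
  have center_reachable_some (i : Fin m) (v : V) (h : (i, some v) ∈ Uᶜ) :
      ((Rm G m).induce Uᶜ).Reachable ⟨(j, none), hj none⟩ ⟨(i, some v), h⟩ := by
    by_cases hij : j = i
    · exact reachable_of_adj _ _ (Rm_adj_none_some.2 hij)
    · obtain ⟨w, hw⟩ := hG v
      exact (reachable_of_adj (hj none) (hj (some w)) (Rm_adj_none_some.2 rfl)).trans
        (reachable_of_adj _ h (Rm_adj_some_some.2 ⟨hij, hw.symm⟩))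
  refine (connected_iff_exists_forall_reachable _).2 ⟨⟨(j, none), hj none⟩, ?_⟩
  rintro ⟨⟨i, _ | v⟩, hx⟩
  · obtain ⟨v, hv⟩ := exists_notMem_of_encard_lt (f := fun v => (i, some v))
      (fun _ _ h => by simpa using h) hUV
    exact (center_reachable_some i v hv).trans (reachable_of_adj hv hx (Rm_adj_some_none.2 rfl))
  · exact center_reachable_some i v hx

/-- The `i`-th row of `R_m(G)` together with all copies of the vertices in `S`; the bags of the
decompositions witnessing the upper bounds are of this form. -/
def rowBox (i : Fin m) (S : Set V) : Set (Fin m × Option V) :=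
  {x | x.1 = i} ∪ box Set.univ S

@[simp]
theorem mem_rowBox_none {i j : Fin m} {S : Set V} : (j, none) ∈ rowBox i S ↔ j = i := by
  simp [rowBox, box]

@[simp]
theorem mem_rowBox_some {i j : Fin m} {S : Set V} {v : V} :
    (j, some v) ∈ rowBox i S ↔ j = i ∨ v ∈ S := by
  simp [rowBox, box]

theorem Rm_induce_box_colorable {J : Set (Fin m)} {S : Set V} {c : ℕ} [NeZero c]
    (h : (G.induce S).Colorable c) : ((Rm G m).induce (box J S)).Colorable c := by
  obtain ⟨f, hf⟩ := exists_isColoringOn (α := Fin c) h (Fintype.card_fin c).ge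
  suffices hF : IsColoringOn (Rm G m) (fun x => x.2.elim 0 f) (box J S) by
    simpa using hF.colorable
  rintro ⟨i, _⟩ ⟨-, u, hu, rfl⟩ ⟨j, _⟩ ⟨-, v, hv, rfl⟩ huv
  exact hf u hu v hv (Rm_adj_some_some.1 huv).2

theorem Rm_induce_rowBox_colorable (i : Fin m) {S : Set V} {c : ℕ} [NeZero c]
    (h : (G.induce S).Colorable c) : ((Rm G m).induce (rowBox i S)).Colorable (c + 1) := by
  obtain ⟨f, hf⟩ := exists_isColoringOn (α := Fin c) h (Fintype.card_fin c).ge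
  let F : Fin m × Option V → Option (Fin c)
    | (_, none) => some 0
    | (j, some v) => if j = i then none else some (f v)
  suffices hF : IsColoringOn (Rm G m) F (rowBox i S) by simpa using hF.colorable
  rintro ⟨j, _ | u⟩ hu ⟨k, _ | v⟩ hv huv
  · simp at huv
  · simp_all [F]
  · simp_all [F]
  · have := hf u
    grind [Rm_adj_some_some, mem_rowBox_some]

/-- The bags, indexed by a star, of a tree-decomposition of `R_m(G)`: the centre carries the copies
of `G - I` and the `i`-th leaf carries the `i`-th row and all copies of the neighbours of `I`. -/
def starBag (G : SimpleGraph V) (I : Set V) {m : ℕ} :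
    Option (ULift.{u} (Fin m)) → Set (Fin m × Option V)
  | none => box Set.univ Iᶜ
  | some i => rowBox i.down {w | ∃ v ∈ I, G.Adj v w}

theorem mem_starBag_row {I : Set V} (x : Fin m × Option V) : x ∈ starBag G I (some ⟨x.1⟩) :=
  Or.inl rfl

theorem starBag_induce_connected {I : Set V} (hI : G.IsIndepSet I) (x : Fin m × Option V) :
    ((starGraph none).induce {t | x ∈ starBag G I t}).Connected := by
  by_cases hx : x ∈ starBag G I none
  · refine Connected.of_isUniversal (v := ⟨none, hx⟩) fun t ht => ?_
    exact starGraph_center_adj fun h => ht (Subtype.ext h)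
  · refine Connected.of_isUniversal (v := ⟨some ⟨x.1⟩, mem_starBag_row x⟩) fun t ht => ?_
    refine absurd (Subtype.ext ?_) ht
    obtain ⟨_ | i, hi⟩ := t
    · exact absurd hi hx
    obtain hi | ⟨-, w, ⟨v, hv, hvw⟩, hw⟩ := hi
    · exact congrArg (fun i => some (ULift.up i)) hi
    · exact absurd ⟨trivial, w, fun hwI => hI hv hwI hvw.ne hvw, hw⟩ hx

theorem isTreeDecomp_starBag {I : Set V} (hI : G.IsIndepSet I) :
    IsTreeDecomp (Rm G m) (starGraph none) (starBag G I) := by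
  refine ⟨isTree_starGraph none, fun x => ⟨_, mem_starBag_row x⟩, ?_,
    starBag_induce_connected hI⟩
  rintro ⟨i, _ | u⟩ ⟨j, _ | v⟩ huv
  · simp at huv
  · exact ⟨some ⟨i⟩, mem_starBag_row _, Or.inl (Rm_adj_none_some.1 huv).symm⟩
  · exact ⟨some ⟨i⟩, mem_starBag_row _, Or.inl (Rm_adj_some_none.1 huv).symm⟩
  · have huv' := (Rm_adj_some_some.1 huv).2
    by_cases hu : u ∈ I
    · exact ⟨some ⟨i⟩, mem_starBag_row _, mem_rowBox_some.2 (Or.inr ⟨u, hu, huv'⟩)⟩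
    by_cases hv : v ∈ I
    · exact ⟨some ⟨j⟩, mem_rowBox_some.2 (Or.inr ⟨v, hv, huv'.symm⟩), mem_starBag_row _⟩
    · exact ⟨none, ⟨trivial, u, hu, rfl⟩, ⟨trivial, v, hv, rfl⟩⟩

theorem starBag_induce_colorable {I : Set V} {c : ℕ} [NeZero c]
    (hIc : (G.induce Iᶜ).Colorable (c + 1))
    (hN : (G.induce {w | ∃ v ∈ I, G.Adj v w}).Colorable c) (t : Option (ULift.{u} (Fin m))) :
    ((Rm G m).induce (starBag G I t)).Colorable (c + 1) :=
  match t with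
  | none => Rm_induce_box_colorable hIc
  | some i => Rm_induce_rowBox_colorable i.down hN

theorem isPathDecomp_rowBox {I : Set V} (hI : G.IsIndepSet I) :
    IsPathDecomp (Rm G m) fun i => rowBox i Iᶜ := by
  refine ⟨fun x => ⟨x.1, Or.inl rfl⟩, ?_, ?_⟩
  · rintro ⟨i, _ | u⟩ ⟨j, _ | v⟩ huv
    · simp at huv
    · exact ⟨i, Or.inl rfl, Or.inl (Rm_adj_none_some.1 huv).symm⟩
    · exact ⟨i, Or.inl rfl, Or.inl (Rm_adj_some_none.1 huv).symm⟩
    · have huv' := (Rm_adj_some_some.1 huv).2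
      by_cases hu : u ∈ I
      · have hv : v ∉ I := fun hv => hI hu hv huv'.ne huv'
        exact ⟨i, Or.inl rfl, mem_rowBox_some.2 (Or.inr hv)⟩
      · exact ⟨j, mem_rowBox_some.2 (Or.inr hu), Or.inl rfl⟩
  · rintro ⟨i, _ | v⟩ t₁ t₂ t₃ h₁₂ h₂₃ h₁ h₃
    · simp only [mem_rowBox_none] at h₁ h₃ ⊢
      exact le_antisymm (h₁.trans_le h₁₂) (h₂₃.trans_eq h₃.symm)
    · simp only [mem_rowBox_some] at h₁ h₃ ⊢
      grind

end Rm

/-- A path-decomposition of `H` with index set `τ`, encoded by the interval `[lo x, hi x]` of the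
indices of the bags containing `x`. An arbitrary linear order is allowed as index set so that
reversing time amounts to dualizing `τ`. -/
structure IntervalDecomp {W : Type*} (H : SimpleGraph W) (τ : Type*) [LinearOrder τ] where
  lo : W → τ
  hi : W → τ
  lo_le_hi : ∀ x, lo x ≤ hi x
  lo_le_hi_of_adj : ∀ {x y}, H.Adj x y → lo x ≤ hi y

namespace IntervalDecomp

variable {W τ : Type*} [LinearOrder τ] {H : SimpleGraph W}

/-- The bag with index `t` of the path-decomposition encoded by `D`. -/
def bag (D : IntervalDecomp H τ) (t : τ) : Set W :=
  {x | D.lo x ≤ t ∧ t ≤ D.hi x}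

/-- Time reversal. -/
def rev (D : IntervalDecomp H τ) : IntervalDecomp H τᵒᵈ where
  lo x := OrderDual.toDual (D.hi x)
  hi x := OrderDual.toDual (D.lo x)
  lo_le_hi := D.lo_le_hi
  lo_le_hi_of_adj hxy := D.lo_le_hi_of_adj hxy.symm

theorem rev_bag (D : IntervalDecomp H τ) (t : τ) : D.rev.bag (OrderDual.toDual t) = D.bag t :=
  Set.ext fun _ => and_comm

end IntervalDecomp

theorem IsPathDecomp.exists_intervalDecomp {G : SimpleGraph V} {s : ℕ} {B : Fin s → Set V}
    (hB : IsPathDecomp G B) : ∃ D : IntervalDecomp G (Fin s), ∀ t, D.bag t = B t := by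
  obtain ⟨hcover, hedge, hconvex⟩ := hB
  have exists_mem_iff (v : V) : ∃ a b, ∀ t, v ∈ B t ↔ a ≤ t ∧ t ≤ b := by
    have hfin : {t | v ∈ B t}.Finite := Set.toFinite _
    obtain ⟨a, ha, hamin⟩ := Set.exists_min_image _ id hfin (hcover v)
    obtain ⟨b, hb, hbmax⟩ := Set.exists_max_image _ id hfin (hcover v)
    exact ⟨a, b, fun t => ⟨fun ht => ⟨hamin t ht, hbmax t ht⟩,
      fun ht => hconvex v a t b ht.1 ht.2 ha hb⟩⟩
  choose lo hi mem_iff using exists_mem_iff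
  refine ⟨⟨lo, hi, fun v => ?_, fun {u v} huv => ?_⟩, fun t => Set.ext fun v => (mem_iff v t).symm⟩
  · obtain ⟨t, ht⟩ := hcover v
    exact ((mem_iff v t).1 ht).1.trans ((mem_iff v t).1 ht).2
  · obtain ⟨t, hu, hv⟩ := hedge u v huv
    exact ((mem_iff u t).1 hu).1.trans ((mem_iff v t).1 hv).2

section ThreeCopies

variable {G : SimpleGraph V} {m : ℕ} {S : Set (Fin m × Option V)} {c : Fin m × Option V → Bool}

/-- At least three copies of `v` lie in the subset `S` of `R_m(G)`. -/
def HasThreeCopies (S : Set (Fin m × Option V)) (v : V) : Prop :=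
  ∃ I : Finset (Fin m), 2 < #I ∧ ∀ i ∈ I, (i, some v) ∈ S

-- Copies of `u` and `v` in the same row are not adjacent, but three copies of each vertex suffice
-- to join them by a path of length three through other rows.
theorem IsColoringOn.ne_of_hasThreeCopies (hc : IsColoringOn (Rm G m) c S) {u v : V}
    (huv : G.Adj u v) (hu : HasThreeCopies S u) (hv : HasThreeCopies S v) {i j : Fin m}
    (hi : (i, some u) ∈ S) (hj : (j, some v) ∈ S) : c (i, some u) ≠ c (j, some v) := by
  have ne_of_ne {i j} (hij : i ≠ j) (hi : (i, some u) ∈ S) (hj : (j, some v) ∈ S) :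
      c (i, some u) ≠ c (j, some v) := hc _ hi _ hj (Rm_adj_some_some.2 ⟨hij, huv⟩)
  obtain hij | rfl := ne_or_eq i j
  · exact ne_of_ne hij hi hj
  obtain ⟨I, hI, hIS⟩ := hu
  obtain ⟨J, hJ, hJS⟩ := hv
  obtain ⟨i', hi', hii'⟩ := Finset.exists_mem_ne (Nat.lt_of_succ_lt hI) i
  obtain ⟨j', hj', hjj'⟩ := Finset.exists_mem_notMem_of_card_lt_card
    ((Finset.card_le_two (a := i) (b := i')).trans_lt hJ)
  rw [Finset.mem_insert, Finset.mem_singleton, not_or] at hjj'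
  have h₁ := ne_of_ne (Ne.symm hjj'.1) hi (hJS j' hj')
  have h₂ := ne_of_ne (Ne.symm hjj'.2) (hIS i' hi') (hJS j' hj')
  have h₃ := ne_of_ne hii' (hIS i' hi') hj
  rw [← Bool.eq_not] at h₁ h₂ h₃
  simp [h₁, h₃.symm ▸ h₂]

theorem IsColoringOn.not_adj_of_card_lt (hc : IsColoringOn (Rm G m) c S) {u v : V}
    {I J K : Finset (Fin m)} (hI : 2 < #I) (hJ : 2 < #J) (hIK : I ⊆ K) (hJK : J ⊆ K)
    (hK : #K < #I + #J) (hKS : ∀ k ∈ K, (k, none) ∈ S) (hIS : ∀ i ∈ I, (i, some u) ∈ S)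
    (hJS : ∀ j ∈ J, (j, some v) ∈ S) : ¬ G.Adj u v := by
  intro huv
  obtain ⟨k, hk⟩ := Finset.inter_nonempty_of_card_lt_card_add_card hIK hJK hK
  obtain ⟨hkI, hkJ⟩ := Finset.mem_inter.1 hk
  have hkS := hKS k (hIK hkI)
  have h₁ := hc _ hkS _ (hIS k hkI) (Rm_adj_none_some.2 rfl)
  have h₂ := hc _ hkS _ (hJS k hkJ) (Rm_adj_none_some.2 rfl)
  have h₃ := hc.ne_of_hasThreeCopies huv ⟨I, hI, hIS⟩ ⟨J, hJ, hJS⟩ (hIS k hkI) (hJS k hkJ)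
  rw [← Bool.eq_not] at h₁ h₂ h₃
  simp_all

end ThreeCopies

-- `δ v` and `α v` delimit the period in which `v` is present, which is empty if `α v < δ v`. Among
-- the vertices not handled by `f` or `g`, two adjacent ones cannot both be present (their periods
-- would meet between `p` and `q`) nor both be absent (`δ v ≤ α w < δ w ≤ α v < δ v`).
theorem isBipartite_of_glue {τ : Type*} [LinearOrder τ] {G : SimpleGraph V} {α δ : V → τ} {p q : τ}
    (hpq : p ≤ q) (hδα : ∀ v w, G.Adj v w → δ v ≤ α w)
    (hmid : ∀ v w t, G.Adj v w → p ≤ t → t ≤ q → δ v ≤ t → t ≤ α v → δ w ≤ t → ¬ t ≤ α w)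
    {f g : V → Bool} (hf : ∀ v, p ≤ α v → f v = false)
    (hf_ne : ∀ v w, G.Adj v w → α v < p → f v ≠ f w) (hg : ∀ v, δ v ≤ q → g v = false)
    (hg_ne : ∀ v w, G.Adj v w → q < δ v → g v ≠ g w) : G.IsBipartite := by
  let h v := if α v < p then f v else if q < δ v then g v else decide (α v < δ v)
  have h_ne_of_lt {v w} (hvw : G.Adj v w) (hv : α v < p) : h v ≠ h w := by
    have := hf_ne v w hvw hv
    have := hδα w v hvw.symm
    grind
  have h_ne_of_gt {v w} (hvw : G.Adj v w) (hv : q < δ v) : h v ≠ h w := by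
    have := hg_ne v w hvw hv
    have := hδα v w hvw
    grind
  refine isBipartite_of_forall_adj_ne (f := h) fun v w hvw => ?_
  obtain hv | hv := lt_or_ge (α v) p
  · exact h_ne_of_lt hvw hv
  obtain hw | hw := lt_or_ge (α w) p
  · exact (h_ne_of_lt hvw.symm hw).symm
  obtain hv' | hv' := lt_or_ge q (δ v)
  · exact h_ne_of_gt hvw hv'
  obtain hw' | hw' := lt_or_ge q (δ w)
  · exact (h_ne_of_gt hvw.symm hw').symm
  have := hδα v w hvw
  have := hδα w v hvw.symm
  have := hmid v w (p ⊔ (δ v ⊔ δ w)) hvw le_sup_left (by simp [*])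
  grind

namespace IntervalDecomp

variable {τ : Type*} [LinearOrder τ] {G : SimpleGraph V} {m : ℕ} (D : IntervalDecomp (Rm G m) τ)

theorem le_hi_some {t : τ} {i : Fin m} (h : t ≤ D.lo (i, none)) (v : V) : t ≤ D.hi (i, some v) :=
  h.trans (D.lo_le_hi_of_adj (Rm_adj_none_some.2 rfl))

theorem lo_some_le {t : τ} {i : Fin m} (h : D.hi (i, none) ≤ t) (v : V) : D.lo (i, some v) ≤ t :=
  (D.lo_le_hi_of_adj (Rm_adj_some_none.2 rfl)).trans h

theorem le_hi_some_of_adj {t : τ} {k : Fin m} {v w : V} (h : t ≤ D.lo (k, none))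
    (hv : t ≤ D.lo (k, some v)) (hvw : G.Adj v w) (i : Fin m) : t ≤ D.hi (i, some w) := by
  obtain rfl | hki := eq_or_ne k i
  · exact D.le_hi_some h w
  · exact hv.trans (D.lo_le_hi_of_adj (Rm_adj_some_some.2 ⟨hki, hvw⟩))

theorem isBipartite_of_hi_le_of_le_lo {t : τ} (ht : ((Rm G m).induce (D.bag t)).Colorable 2)
    {L R : Finset (Fin m)} (hL : 2 < #L) (hLt : ∀ i ∈ L, D.hi (i, none) ≤ t) (hR : 2 < #R)
    (hRt : ∀ i ∈ R, t ≤ D.lo (i, none)) {j : Fin m} (hj : j ∈ L) (hjt : D.hi (j, none) = t) :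
    G.IsBipartite := by
  classical
  obtain ⟨c, hc⟩ := exists_isColoringOn (α := Bool) ht le_rfl
  have mem_bag_of_adj {v w} (hvw : G.Adj v w) (hv : ¬ HasThreeCopies (D.bag t) v) :
      ∀ i ∈ L, (i, some w) ∈ D.bag t := by
    obtain ⟨k, hk, hkt⟩ : ∃ k ∈ R, t < D.lo (k, some v) := by
      by_contra! hle
      exact hv ⟨R, hR, fun k hk => ⟨hle k hk, D.le_hi_some (hRt k hk) v⟩⟩
    exact fun i hi => ⟨D.lo_some_le (hLt i hi) w, D.le_hi_some_of_adj (hRt k hk) hkt.le hvw i⟩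
  have exists_copy (v : V) : ∃ i, (HasThreeCopies (D.bag t) v → (i, some v) ∈ D.bag t) ∧
      ((j, some v) ∈ D.bag t → i = j) := by
    by_cases hjv : (j, some v) ∈ D.bag t
    · exact ⟨j, fun _ => hjv, fun _ => rfl⟩
    by_cases hv : HasThreeCopies (D.bag t) v
    · obtain ⟨I, hI, hIv⟩ := hv
      obtain ⟨i, hi⟩ := Finset.card_pos.1 (Nat.zero_lt_of_lt hI)
      exact ⟨i, fun _ => hIv i hi, fun h => absurd h hjv⟩
    · exact ⟨j, fun h => absurd h hv, fun _ => rfl⟩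
  choose r hr hrj using exists_copy
  let f v := if HasThreeCopies (D.bag t) v then c (r v, some v) else c (j, none)
  have f_ne_of_adj {v w} (hvw : G.Adj v w) (hv : ¬ HasThreeCopies (D.bag t) v) : f v ≠ f w := by
    have hw := mem_bag_of_adj hvw hv
    simp only [f, if_neg hv, if_pos (show HasThreeCopies (D.bag t) w from ⟨L, hL, hw⟩),
      hrj w (hw j hj)]
    exact hc _ ⟨hjt ▸ D.lo_le_hi _, hjt.ge⟩ _ (hw j hj) (Rm_adj_none_some.2 rfl)
  refine isBipartite_of_forall_adj_ne (f := f) fun v w hvw => ?_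
  by_cases hv : HasThreeCopies (D.bag t) v
  · by_cases hw : HasThreeCopies (D.bag t) w
    · simpa only [f, if_pos hv, if_pos hw] using
        hc.ne_of_hasThreeCopies hvw hv hw (hr v hv) (hr w hw)
    · exact (f_ne_of_adj hvw.symm hw).symm
  · exact f_ne_of_adj hvw hv

/-- The vertices of `G` at least two of whose copies in the rows of `K` only occur in bags with an
index smaller than `p`. -/
def passed (K : Finset (Fin m)) (p : τ) : Set V :=
  {v | 1 < #{k ∈ K | D.hi (k, some v) < p}}

theorem exists_lt_iff_mem_passed {K : Finset (Fin m)} (hK : 1 < #K) :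
    ∃ a : V → Fin m, ∀ v p, D.hi (a v, some v) < p ↔ v ∈ D.passed K p := by
  choose a _ ha using fun v => exists_forall_lt_iff_lt_card_filter_lt (fun k => D.hi (k, some v)) hK
  exact ⟨a, ha⟩

theorem lo_lt_of_mem_passed {K : Finset (Fin m)} {p : τ} {v w : V} (hv : v ∈ D.passed K p)
    (hvw : G.Adj v w) (k : Fin m) : D.lo (k, some w) < p := by
  obtain ⟨i, hi, hik⟩ := Finset.exists_mem_ne hv k
  exact (D.lo_le_hi_of_adj (Rm_adj_some_some.2 ⟨hik.symm, hvw.symm⟩)).trans_lt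
    (Finset.mem_filter.1 hi).2

theorem exists_coloring_passed {p : τ} (hp : ((Rm G m).induce (D.bag p)).Colorable 2)
    {R K : Finset (Fin m)} (hR : 2 < #R) (hRp : ∀ k ∈ R, p ≤ D.lo (k, none)) (hK : 2 < #K)
    (hKp : ∀ k ∈ K, (k, none) ∈ D.bag p) :
    ∃ f : V → Bool, (∀ v, v ∉ D.passed K p → f v = false) ∧
      ∀ v w, G.Adj v w → v ∈ D.passed K p → f v ≠ f w := by
  classical
  obtain ⟨c, hc⟩ := exists_isColoringOn (α := Bool) hp le_rfl
  obtain ⟨k₀, hk₀⟩ := Finset.card_pos.1 (Nat.zero_lt_of_lt hR)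
  obtain ⟨k₁, hk₁, k₂, hk₂, hk₁₂, hcol⟩ := Finset.exists_ne_map_eq_of_card_lt_of_maps_to
    (t := Finset.univ) (f := fun k => c (k, none)) (by simpa using hK)
    (fun _ _ => Finset.mem_univ _)
  let late : Set V := {v | ∃ k ∈ R, p < D.lo (k, some v)}
  have mem_bag {v} (hv : v ∉ late) : ∀ k ∈ R, (k, some v) ∈ D.bag p := fun k hk =>
    ⟨not_lt.1 fun h => hv ⟨k, hk, h⟩, D.le_hi_some (hRp k hk) v⟩
  have notMem_late {v w} (hvw : G.Adj v w) (hv : v ∈ D.passed K p) : w ∉ late :=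
    fun ⟨k, _, hk⟩ => lt_asymm hk (D.lo_lt_of_mem_passed hv hvw k)
  have exists_row {w} (hw : w ∉ D.passed K p) :
      ∃ k ∈ K, c (k, none) = c (k₁, none) ∧ p ≤ D.hi (k, some w) := by
    by_contra! hlt
    exact hw (Finset.one_lt_card.2
      ⟨k₁, Finset.mem_filter.2 ⟨hk₁, hlt k₁ hk₁ rfl⟩,
        k₂, Finset.mem_filter.2 ⟨hk₂, hlt k₂ hk₂ hcol.symm⟩, hk₁₂⟩)
  -- A non-passed `w` adjacent to a passed `v` that is not late has a copy in a row of `K` whose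
  -- centre is coloured like `(k₁, v₀)`; so this copy is not, whereas the copy of `v` is.
  refine ⟨fun v => decide (v ∈ D.passed K p ∧ (v ∈ late ∨ c (k₀, some v) = c (k₁, none))),
    fun v hv => by simp [hv], fun v w hvw hv => ?_⟩
  have hwl := notMem_late hvw hv
  by_cases hvl : v ∈ late
  · have hw : w ∉ D.passed K p := fun hw => notMem_late hvw.symm hw hvl
    simp [hv, hvl, hw]
  have c_ne {k} (hk : (k, some w) ∈ D.bag p) : c (k₀, some v) ≠ c (k, some w) :=
    hc.ne_of_hasThreeCopies hvw ⟨R, hR, mem_bag hvl⟩ ⟨R, hR, mem_bag hwl⟩ (mem_bag hvl k₀ hk₀) hk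
  by_cases hw : w ∈ D.passed K p
  · simp only [hv, hw, hvl, hwl, true_and, false_or, ne_eq, decide_eq_decide,
      Bool.eq_not.2 (c_ne (mem_bag hwl k₀ hk₀))]
    cases c (k₀, some w) <;> cases c (k₁, none) <;> decide
  · obtain ⟨k, hkK, hkc, hkw⟩ := exists_row hw
    have hkw : (k, some w) ∈ D.bag p := ⟨(D.lo_lt_of_mem_passed hv hvw k).le, hkw⟩
    have hk := hc _ (hKp k hkK) _ hkw (Rm_adj_none_some.2 rfl)
    have hv₁ : c (k₀, some v) = c (k₁, none) := by
      rw [← hkc, Bool.eq_not.2 hk, Bool.eq_not.2 (c_ne hkw)]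
    simp [hv, hw, hv₁]

theorem isBipartite_of_lo_le_of_le_hi (hD : ∀ t, ((Rm G m).induce (D.bag t)).Colorable 2) {p q : τ}
    (hpq : p ≤ q) {L R K : Finset (Fin m)} (hL : 2 < #L) (hLq : ∀ i ∈ L, D.hi (i, none) ≤ q)
    (hR : 2 < #R) (hRp : ∀ i ∈ R, p ≤ D.lo (i, none)) (hK : #K = 5)
    (hKp : ∀ k ∈ K, D.lo (k, none) ≤ p) (hKq : ∀ k ∈ K, q ≤ D.hi (k, none)) :
    G.IsBipartite := by
  obtain ⟨a, ha⟩ := D.exists_lt_iff_mem_passed (K := K) (by simp [hK])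
  obtain ⟨d, hd⟩ := D.rev.exists_lt_iff_mem_passed (K := K) (by simp [hK])
  obtain ⟨f, hf, hf_ne⟩ := D.exists_coloring_passed (hD p) hR hRp (hK ▸ by decide)
    fun k hk => ⟨hKp k hk, hpq.trans (hKq k hk)⟩
  obtain ⟨g, hg, hg_ne⟩ := D.rev.exists_coloring_passed (D.rev_bag q ▸ hD q) hL hLq
    (hK ▸ by decide) fun k hk => ⟨hKq k hk, (hKp k hk).trans hpq⟩
  have two_lt_card {v t} (hdt : D.lo (d v, some v) ≤ t) (hta : t ≤ D.hi (a v, some v)) :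
      2 < #{k ∈ K | D.lo (k, some v) ≤ t ∧ t ≤ D.hi (k, some v)} := by
    have h₁ : #{k ∈ K | D.hi (k, some v) < t} ≤ 1 :=
      not_lt.1 fun h => hta.not_gt ((ha v t).2 h)
    have h₂ : #{k ∈ K | t < D.lo (k, some v)} ≤ 1 :=
      not_lt.1 fun h => hdt.not_gt ((hd v (OrderDual.toDual t)).2 h)
    have := card_le_card_filter_le_and_le_add K (fun k => D.lo (k, some v))
      (fun k => D.hi (k, some v)) t t
    lia
  refine isBipartite_of_glue (α := fun v => D.hi (a v, some v)) (δ := fun v => D.lo (d v, some v))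
    hpq (fun v w hvw => ?_) (fun v w t hvw hpt htq hdv hva hdw hwa => ?_)
    (fun v hv => hf v fun h => hv.not_gt ((ha v p).2 h))
    (fun v w hvw hv => hf_ne v w hvw ((ha v p).1 hv))
    (fun v hv => hg v fun h => hv.not_gt ((hd v (OrderDual.toDual q)).2 h))
    (fun v w hvw hv => hg_ne v w hvw ((hd v (OrderDual.toDual q)).1 hv))
  · exact not_lt.1 fun h => lt_irrefl _ (D.lo_lt_of_mem_passed ((ha w _).1 h) hvw.symm (d v))
  · have hv := two_lt_card hdv hva
    have hw := two_lt_card hdw hwa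
    obtain ⟨c, hc⟩ := exists_isColoringOn (α := Bool) (hD t) le_rfl
    exact hc.not_adj_of_card_lt hv hw (Finset.filter_subset _ K) (Finset.filter_subset _ K)
      (by lia) (fun k hk => ⟨(hKp k hk).trans hpt, htq.trans (hKq k hk)⟩)
      (fun k hk => (Finset.mem_filter.1 hk).2) (fun k hk => (Finset.mem_filter.1 hk).2) hvw

theorem isBipartite_of_nine_le (hm : 9 ≤ m)
    (hD : ∀ t, ((Rm G m).induce (D.bag t)).Colorable 2) : G.IsBipartite := by
  have hcard : 2 < #(Finset.univ : Finset (Fin m)) := by simp; lia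
  obtain ⟨j, -, hjlt, hjle⟩ :=
    exists_card_filter_lt_le_and_lt_card_filter_le (fun i => D.hi (i, none)) hcard
  obtain ⟨k, -, hklt, hkle⟩ :=
    exists_card_filter_lt_le_and_lt_card_filter_le (fun i => D.rev.hi (i, none)) hcard
  obtain hjk | hkj := le_or_gt (D.hi (j, none)) (D.lo (k, none))
  · exact D.isBipartite_of_hi_le_of_le_lo (hD _) hjle (fun i hi => (Finset.mem_filter.1 hi).2)
      hkle (fun i hi => hjk.trans (Finset.mem_filter.1 hi).2) (by simp) rfl
  · have := card_le_card_filter_le_and_le_add Finset.univ (fun i => D.lo (i, none))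
      (fun i => D.hi (i, none)) (D.lo (k, none)) (D.hi (j, none))
    rw [Finset.card_fin] at this
    obtain ⟨K, hKsub, hK⟩ := Finset.exists_subset_card_eq (n := 5)
      (s := {i | D.lo (i, none) ≤ D.lo (k, none) ∧ D.hi (j, none) ≤ D.hi (i, none)}) (by
        change #{i | D.lo (k, none) < D.lo (i, none)} ≤ 2 at hklt
        lia)
    exact D.isBipartite_of_lo_le_of_le_hi hD hkj.le hjle (fun i hi => (Finset.mem_filter.1 hi).2)
      hkle (fun i hi => (Finset.mem_filter.1 hi).2) hK
      (fun i hi => (Finset.mem_filter.1 (hKsub hi)).2.1)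
      (fun i hi => (Finset.mem_filter.1 (hKsub hi)).2.2)

end IntervalDecomp

section ChromaticNumbers

variable {G : SimpleGraph V} {m : ℕ} {I : Set V}

theorem two_le_of_isTreeDecomp {ι : Type u} {T : SimpleGraph ι} {B : ι → Set V} {r : ℕ} {u v : V}
    (huv : G.Adj u v) (hB : IsTreeDecomp G T B) (hr : ∀ t, (G.induce (B t)).Colorable r) :
    2 ≤ r := by
  obtain ⟨t, hu, hv⟩ := hB.2.2.1 u v huv
  by_contra! hr2
  exact not_colorable_one_of_adj huv hu hv ((hr t).mono (Nat.le_of_lt_succ hr2))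

theorem treeChromatic_Rm_eq_two [Nonempty V] [NeZero m] (hI : G.IsIndepSet I)
    (hIc : (G.induce Iᶜ).Colorable 2) (hN : (G.induce {w | ∃ v ∈ I, G.Adj v w}).Colorable 1) :
    treeChromatic (Rm G m) = 2 := by
  have htwo : ∃ (ι : Type u) (T : SimpleGraph ι) (B : ι → Set (Fin m × Option V)),
      IsTreeDecomp (Rm G m) T B ∧ ∀ t, ((Rm G m).induce (B t)).Colorable 2 :=
    ⟨_, _, _, isTreeDecomp_starBag hI, starBag_induce_colorable hIc hN⟩
  refine le_antisymm (Nat.sInf_le htwo) (le_csInf ⟨2, htwo⟩ ?_)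
  rintro r ⟨ι, T, B, hB, hr⟩
  exact two_le_of_isTreeDecomp
    (Rm_adj_none_some (i := 0) (v := Classical.arbitrary V) |>.2 rfl) hB hr

theorem pathChromatic_Rm_eq_three (hG : ¬ G.IsBipartite) (hI : G.IsIndepSet I)
    (hIc : (G.induce Iᶜ).Colorable 2) (hm : 9 ≤ m) : pathChromatic (Rm G m) = 3 := by
  have hthree : ∃ (s : ℕ) (B : Fin s → Set (Fin m × Option V)),
      IsPathDecomp (Rm G m) B ∧ ∀ t, ((Rm G m).induce (B t)).Colorable 3 :=
    ⟨m, _, isPathDecomp_rowBox hI, fun i => Rm_induce_rowBox_colorable i hIc⟩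
  refine le_antisymm (Nat.sInf_le hthree) (le_csInf ⟨3, hthree⟩ ?_)
  rintro r ⟨s, B, hB, hr⟩
  by_contra! hr3
  obtain ⟨D, hD⟩ := hB.exists_intervalDecomp
  exact hG (D.isBipartite_of_nine_le hm fun t =>
    hD t ▸ (hr t).mono (Nat.le_of_lt_succ hr3))

end ChromaticNumbers

section OddCycle

variable {n : ℕ}

theorem cyc_adj (hn : 3 ≤ n) {a b : Fin n} : (cyc n).Adj a b ↔
    (a : ℕ) + 1 = b ∨ (b : ℕ) + 1 = a ∨ ((a : ℕ) = 0 ∧ (b : ℕ) + 1 = n) ∨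
      ((b : ℕ) = 0 ∧ (a : ℕ) + 1 = n) := by
  simp only [cyc, fromRel_adj, ne_eq, Fin.ext_iff]
  lia

theorem cyc_eq_cycleGraph (hn : 3 ≤ n) : cyc n = cycleGraph n := by
  ext a b
  rw [cyc_adj hn, cycleGraph_adj']
  obtain h | rfl | h := lt_trichotomy a b
  · rw [Fin.sub_val_of_le h.le, Fin.coe_sub_iff_lt.2 h]
    lia
  · rw [Fin.coe_sub_iff_le.2 le_rfl]
    lia
  · rw [Fin.sub_val_of_le h.le, Fin.coe_sub_iff_lt.2 h]
    lia

theorem cyc_exists_adj (hn : 3 ≤ n) (v : Fin n) : ∃ w, (cyc n).Adj v w := by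
  obtain hv | hv := Nat.lt_or_ge (v + 1) n
  · exact ⟨⟨v + 1, hv⟩, (cyc_adj hn).2 (Or.inl rfl)⟩
  · exact ⟨⟨0, by lia⟩, (cyc_adj hn).2 (by grind)⟩

theorem not_isBipartite_cyc (hn : 3 ≤ n) (hodd : Odd n) : ¬ (cyc n).IsBipartite := fun h => by
  have hle := Colorable.chromaticNumber_le h
  rw [cyc_eq_cycleGraph hn, chromaticNumber_cycleGraph_of_odd n (by lia) hodd] at hle
  exact absurd hle (by decide)

theorem cyc_induce_compl_zero_colorable [NeZero n] (hn : 3 ≤ n) :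
    ((cyc n).induce ({0}ᶜ : Set (Fin n))).Colorable 2 := by
  suffices h : IsColoringOn (cyc n) (fun v => decide (Even (v : ℕ))) {0}ᶜ by
    simpa using h.colorable
  intro u hu v hv huv
  rw [cyc_adj hn] at huv
  simp only [Set.mem_compl_iff, Set.mem_singleton_iff, Fin.ext_iff, Fin.val_zero] at hu hv
  grind

theorem cyc_induce_neighbors_zero_colorable [NeZero n] (hn : 5 ≤ n) :
    ((cyc n).induce {w | ∃ v ∈ ({0} : Set (Fin n)), (cyc n).Adj v w}).Colorable 1 := by
  suffices h : IsColoringOn (cyc n) (fun _ => ()) {w | ∃ v ∈ {(0 : Fin n)}, (cyc n).Adj v w} by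
    simpa using h.colorable
  rintro u ⟨_, rfl, hu⟩ v ⟨_, rfl, hv⟩ huv
  simp only [cyc_adj (by lia : 3 ≤ n), Fin.val_zero] at hu hv huv
  lia

end OddCycle

theorem stmt_15_general {G : SimpleGraph V} {I : Set V} {m : ℕ} (hG : ¬ G.IsBipartite)
    (hdeg : ∀ v, ∃ w, G.Adj v w) (hI : G.IsIndepSet I) (hIc : (G.induce Iᶜ).Colorable 2)
    (hN : (G.induce {w | ∃ v ∈ I, G.Adj v w}).Colorable 1) (hm : 9 ≤ m) :
    (∀ U : Set (Fin m × Option V), U.encard < min (ENat.card V) m →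
      ((Rm G m).induce Uᶜ).Connected) ∧
    treeChromatic (Rm G m) = 2 ∧ pathChromatic (Rm G m) = 3 := by
  have : NeZero m := ⟨by lia⟩
  have : Nonempty V := not_isEmpty_iff.1 fun _ => hG (Colorable.of_isEmpty 2)
  exact ⟨fun U hU => Rm_induce_compl_connected hdeg (lt_min_iff.1 hU).1 (lt_min_iff.1 hU).2,
    treeChromatic_Rm_eq_two hI hIc hN, pathChromatic_Rm_eq_three hG hI hIc hm⟩

/-- Corollary: for every `k ≥ 1` there is a `k`-connected graph with
`χ_T ≠ χ_P`; specifically, for odd `n ≥ max(5,k)` and `m ≥ n + 4` the graph `R_m(C_n)` is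
`k`-connected with tree-chromatic number `2` and path-chromatic number `3`. -/
theorem stmt_15 (k : ℕ) (hk : 1 ≤ k) :
    (∃ (W : Type) (G : SimpleGraph W),
      (∀ U : Set W, U.ncard ≤ k - 1 → (G.induce Uᶜ).Connected) ∧
      treeChromatic G ≠ pathChromatic G) ∧
    ∀ n m : ℕ, Odd n → 5 ≤ n → k ≤ n → n + 4 ≤ m →
      (∀ U : Set (Fin m × Option (Fin n)), U.ncard ≤ k - 1 →
        ((Rm (cyc n) m).induce Uᶜ).Connected) ∧
      treeChromatic (Rm (cyc n) m) = 2 ∧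
      pathChromatic (Rm (cyc n) m) = 3 := by
  refine (and_iff_right_of_imp fun hcyc => ?_).2 fun n m hodd hn hkn hnm => ?_
  · obtain ⟨hconn, htree, hpath⟩ :=
      hcyc (2 * k + 5) (2 * k + 9) ⟨k + 2, by ring⟩ (by lia) (by lia) (by lia)
    exact ⟨_, _, hconn, by rw [htree, hpath]; decide⟩
  · have hn3 : 3 ≤ n := by lia
    have : NeZero n := ⟨by lia⟩
    obtain ⟨hconn, hχ⟩ := stmt_15_general (I := {0}) (m := m) (not_isBipartite_cyc hn3 hodd)
      (cyc_exists_adj hn3) (Set.pairwise_singleton 0 _) (cyc_induce_compl_zero_colorable hn3)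
      (cyc_induce_neighbors_zero_colorable hn) (by lia)
    refine ⟨fun U hU => hconn U ?_, hχ⟩
    rw [← U.toFinite.cast_ncard_eq, ENat.card_eq_coe_fintype_card, Fintype.card_fin, lt_min_iff]
    norm_cast
    lia
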